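/- At ψ = 0 the score of the full parameter-driven likelihood with respect to a lag-a dependence parameter equals τ times the lag-a sum of cross-products of posterior-mean residuals. Precisely: fix n ≥ 1, an integer 1 ≤ a < n, integers m_t ≥ 1 and 0 ≤ y_t ≤ m_t, x_t ∈ ℝ, β-linear predictors w_t = x_t (scalars for simplicity absorbed into w_t), and τ ≥ 0. Let ψ ↦ R(ψ) be a map from an open interval around 0 into the symmetric positive-definite n × n matrices, differentiable at 0, with R(0) = I_n and with [R'(0)]_{s,t} = 1 if |s − t| = a and 0 otherwise. Define L(ψ) = ∫_{ℝⁿ} exp( Σ_{t=1}^n [ y_t (w_t + √τ α_t) − m_t b(w_t + √τ α_t) ] ) g(α, R(ψ)) dα, where g(·, R) is the density of N(0, R). Then ψ ↦ log L(ψ) is differentiable at 0 and its derivative equals τ Σ_{t=a+1}^n u_t u_{t−a}, where u_t = y_t − ( ∫_ℝ m_t ḃ(w_t + √τ α) f(y_t | w_t + √τ α) φ(α) dα ) / ( ∫_ℝ f(y_t | w_t + √τ α) φ(α) dα ) and f(y | w) = exp(y·w − m·b(w) + log C(m, y)). -/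

import Mathlib

/-!
The curve `R` enters `L` only through `det R` and `R⁻¹`, with derivatives `det R · tr(R⁻¹ R')` and
`-R⁻¹ R' R⁻¹`. The conditional likelihood is bounded, so one may differentiate under the integral
sign; as `R` is differentiable at a single point only, the domination is by an estimate of
`F ψ - F ψ₀` that is linear in `|ψ - ψ₀|`, not by a bound on derivatives nearby. At `R = 1`, for a
direction `D` with zero diagonal, the trace term vanishes and `L'` is half the integral of
`αᵀ D α` against conditional likelihood times standard normal density.

This weight is a product over coordinates, so for `s ≠ t` the normalised cross moment of `α_s` and
`α_t` is the product of the two posterior means. By Stein's identity, that is, integration by parts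
against the normal density, each posterior mean is `√τ u_t`; hence the score is `τ/2 · uᵀ D u`.
For the lag matrix the pairs `(s, t)` and `(t, s)` contribute equally, which cancels the `1/2`.
-/

open MeasureTheory Real Finset Matrix

noncomputable section

/-- `b(w) = log(1 + e^w)`. -/
def bfun (w : ℝ) : ℝ := Real.log (1 + Real.exp w)

/-- `ḃ(w) = e^w / (1 + e^w)`. -/
def bdot (w : ℝ) : ℝ := Real.exp w / (1 + Real.exp w)

/-- The standard normal density `φ(α) = (2π)^{-1/2} exp(-α²/2)`. -/
def stdNormalPDF (a : ℝ) : ℝ := (Real.sqrt (2 * Real.pi))⁻¹ * Real.exp (-(a ^ 2) / 2)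

/-- The binomial density at state `w`: `f(y | w) = exp(y·w − m·b(w) + log C(m, y))`. -/
def binDens (m y : ℕ) (w : ℝ) : ℝ :=
  Real.exp ((y : ℝ) * w - (m : ℝ) * bfun w + Real.log (Nat.choose m y))

/-- The density of the centered multivariate normal `N(0, R)` on `ℝⁿ`:
`g(α, R) = (2π)^{−n/2} det(R)^{−1/2} exp(−(1/2) αᵀ R⁻¹ α)`. -/
def mvnDens {n : ℕ} (R : Matrix (Fin n) (Fin n) ℝ) (α : Fin n → ℝ) : ℝ :=
  (2 * Real.pi) ^ (-(n : ℝ) / 2) * R.det ^ (-(1 : ℝ) / 2)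
    * Real.exp (-(1 / 2) * (α ⬝ᵥ (R⁻¹ *ᵥ α)))

section MatrixCurve

lemma hasDerivAt_matrix_iff {ι κ : Type*} [Finite ι] [Finite κ] {R : ℝ → Matrix ι κ ℝ}
    {D : Matrix ι κ ℝ} {ψ₀ : ℝ} :
    HasDerivAt R D ψ₀ ↔ ∀ s t, HasDerivAt (fun ψ => R ψ s t) (D s t) ψ₀ := by
  cases nonempty_fintype ι
  cases nonempty_fintype κ
  refine Iff.trans (?_ : _ ↔ ∀ s, HasDerivAt (fun ψ => R ψ s) (D s) ψ₀)
    (forall_congr' fun s => hasDerivAt_pi)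
  exact hasDerivAt_pi (E' := fun _ => κ → ℝ)

variable {ι : Type*} [Fintype ι] {R : ℝ → Matrix ι ι ℝ} {D : Matrix ι ι ℝ} {ψ₀ : ℝ}

lemma dotProduct_mulVec_eq_sum (M : Matrix ι ι ℝ) (α : ι → ℝ) :
    α ⬝ᵥ M *ᵥ α = ∑ s, ∑ t, M s t * (α s * α t) := by
  simp only [dotProduct, mulVec, Finset.mul_sum, mul_left_comm]

lemma hasDerivAt_dotProduct_mulVec (hR : HasDerivAt R D ψ₀) (α : ι → ℝ) :
    HasDerivAt (fun ψ => α ⬝ᵥ R ψ *ᵥ α) (α ⬝ᵥ D *ᵥ α) ψ₀ := by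
  simp only [dotProduct_mulVec_eq_sum]
  exact .fun_sum fun s _ => .fun_sum fun t _ => (hasDerivAt_matrix_iff.1 hR s t).mul_const _

open scoped Matrix.Norms.L2Operator in
lemma abs_dotProduct_mulVec_le [DecidableEq ι] (M : Matrix ι ι ℝ) (α : ι → ℝ) :
    |α ⬝ᵥ M *ᵥ α| ≤ ‖M‖ * (α ⬝ᵥ α) := by
  let v : EuclideanSpace ℝ ι := WithLp.toLp 2 α
  have hv : ‖v‖ * ‖v‖ = α ⬝ᵥ α := by
    rw [← real_inner_self_eq_norm_mul_norm, EuclideanSpace.inner_eq_star_dotProduct, star_trivial]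
  calc |α ⬝ᵥ M *ᵥ α| = |inner ℝ v (WithLp.toLp 2 (M *ᵥ α))| := by
        rw [EuclideanSpace.inner_eq_star_dotProduct, dotProduct_comm, star_trivial]
    _ ≤ ‖v‖ * ‖WithLp.toLp 2 (M *ᵥ α)‖ := abs_real_inner_le_norm _ _
    _ ≤ ‖v‖ * (‖M‖ * ‖v‖) := by gcongr; exact Matrix.l2_opNorm_mulVec M v
    _ = ‖M‖ * (α ⬝ᵥ α) := by rw [← hv]; ring

open scoped Matrix.Norms.L2Operator in
lemma exists_abs_dotProduct_mulVec_sub_le (hR : HasDerivAt R D ψ₀) :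
    ∃ K, ∀ᶠ ψ in nhds ψ₀, ∀ α,
      |α ⬝ᵥ R ψ *ᵥ α - α ⬝ᵥ R ψ₀ *ᵥ α| ≤ K * |ψ - ψ₀| * (α ⬝ᵥ α) := by
  classical
  obtain ⟨K, hbound⟩ := hR.isBigO_sub.bound
  refine ⟨K, hbound.mono fun ψ hψ α => ?_⟩
  rw [← dotProduct_sub, ← sub_mulVec]
  refine (abs_dotProduct_mulVec_le _ α).trans ?_
  gcongr
  · exact dotProduct_self_star_nonneg α
  · exact hψ

open scoped Matrix.Norms.L2Operator MatrixOrder in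
lemma exists_pos_mul_dotProduct_le_of_posDef {Q : Matrix ι ι ℝ} (hQ : Q.PosDef) :
    ∃ c, 0 < c ∧ ∀ α : ι → ℝ, c * (α ⬝ᵥ α) ≤ α ⬝ᵥ Q *ᵥ α := by
  classical
  cases isEmpty_or_nonempty ι
  · exact ⟨1, one_pos, fun α => by simp [dotProduct]⟩
  obtain ⟨c, hc, hle⟩ := (CFC.exists_pos_algebraMap_le_iff (a := Q) hQ.1).2
    fun x hx => hQ.isStrictlyPositive.spectrum_pos hx
  refine ⟨c, hc, fun α => ?_⟩
  simpa [sub_mulVec, Algebra.algebraMap_eq_smul_one, smul_mulVec]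
    using (le_iff.1 hle).dotProduct_mulVec_nonneg α

variable [DecidableEq ι]

-- Differentiate one row at a time: by Cramer's rule, putting row `i` of `D` in place of row `i` of
-- `R ψ₀` turns the determinant into the `i`-th diagonal entry of `D * adjugate (R ψ₀)`.
lemma hasDerivAt_matrix_det (hR : HasDerivAt R D ψ₀) :
    HasDerivAt (fun ψ => (R ψ).det) ((R ψ₀).adjugate * D).trace ψ₀ := by
  let detRows : ContinuousMultilinearMap ℝ (fun _ : ι => ι → ℝ) ℝ :=
    { (detRowAlternating : (ι → ℝ) [⋀^ι]→ₗ[ℝ] ℝ).toMultilinearMap with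
      cont := continuous_id.matrix_det }
  have hrow (i : ι) : ((R ψ₀).updateRow i (D.row i)).det = (D * (R ψ₀).adjugate) i i := by
    rw [← cramer_transpose_apply, cramer_eq_adjugate_mulVec, ← adjugate_transpose, mulVec_transpose]
    rfl
  refine ((detRows.hasFDerivAt (R ψ₀)).comp_hasDerivAt ψ₀ hR).congr_deriv ?_
  rw [trace_mul_comm]
  exact (detRows.linearDeriv_apply _ _).trans (Finset.sum_congr rfl fun i _ => hrow i)

lemma hasDerivAt_matrix_det_rpow (hR : HasDerivAt R D ψ₀) (hdet : (R ψ₀).det ≠ 0) (p : ℝ) :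
    HasDerivAt (fun ψ => (R ψ).det ^ p) (p * ((R ψ₀)⁻¹ * D).trace * (R ψ₀).det ^ p) ψ₀ := by
  refine ((hasDerivAt_matrix_det hR).rpow_const (Or.inl hdet)).congr_deriv ?_
  rw [Matrix.inv_def, Ring.inverse_eq_inv', smul_mul, trace_smul, rpow_sub_one hdet, smul_eq_mul]
  field_simp

open scoped Matrix.Norms.L2Operator in
lemma hasDerivAt_matrix_inv (hR : HasDerivAt R D ψ₀) (hunit : IsUnit (R ψ₀)) :
    HasDerivAt (fun ψ => (R ψ)⁻¹) (-((R ψ₀)⁻¹ * D * (R ψ₀)⁻¹)) ψ₀ := by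
  have hinv := hasFDerivAt_ringInverse (𝕜 := ℝ) hunit.unit
  simp only [nonsing_inv_eq_ringInverse]
  refine (hinv.comp_hasDerivAt ψ₀ hR).congr_deriv ?_
  simp [← Ring.inverse_unit]

end MatrixCurve

section GaussianIntegral

lemma abs_exp_sub_exp_le {x y B : ℝ} (hx : x ≤ B) (hy : y ≤ B) :
    |exp x - exp y| ≤ exp B * |x - y| :=
  (convex_Iic B).norm_image_sub_le_of_norm_deriv_le
    (fun z _ => Real.differentiableAt_exp) (fun z hz => by simpa using hz) hy hx

-- The perturbation uses up at most half of the coercivity constant `c`, which leaves a Gaussian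
-- factor of rate `c / 4`, uniformly in `q`.
lemma abs_exp_neg_half_sub_exp_neg_half_le {q q₀ S c κ : ℝ} (hS : 0 ≤ S) (hc : 0 ≤ c)
    (hq₀ : c * S ≤ q₀) (hκ : κ ≤ c / 2) (hq : |q - q₀| ≤ κ * S) :
    |exp (-(1 / 2) * q) - exp (-(1 / 2) * q₀)| ≤ κ / 2 * (S * exp (-(c / 4) * S)) := by
  have hκS : κ * S ≤ c / 2 * S := by gcongr
  have hcS : 0 ≤ c * S := mul_nonneg hc hS
  have hqle := (abs_le.1 hq).1
  calc |exp (-(1 / 2) * q) - exp (-(1 / 2) * q₀)|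
      ≤ exp (-(c / 4) * S) * |-(1 / 2) * q - -(1 / 2) * q₀| :=
        abs_exp_sub_exp_le (by linarith) (by linarith)
    _ = exp (-(c / 4) * S) * (1 / 2 * |q - q₀|) := by
        rw [← mul_sub, abs_mul, abs_neg, abs_of_pos one_half_pos]
    _ ≤ exp (-(c / 4) * S) * (1 / 2 * (κ * S)) := by gcongr
    _ = κ / 2 * (S * exp (-(c / 4) * S)) := by ring

lemma hasDerivAt_integral_of_dominated_of_lip_at {X : Type*} [MeasurableSpace X] {μ : Measure X}
    {E : Type*} [NormedAddCommGroup E] [NormedSpace ℝ E] {F : ℝ → X → E} {F' : X → E}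
    {bound : X → ℝ} {ψ₀ : ℝ} {s : Set ℝ} (hs : s ∈ nhds ψ₀)
    (hFm : ∀ ψ ∈ s, AEStronglyMeasurable (F ψ) μ) (hF : Integrable (F ψ₀) μ)
    (hF'm : AEStronglyMeasurable F' μ)
    (hlip : ∀ᵐ x ∂μ, ∀ ψ ∈ s, ‖F ψ x - F ψ₀ x‖ ≤ bound x * |ψ - ψ₀|) (hbound : Integrable bound μ)
    (hderiv : ∀ᵐ x ∂μ, HasDerivAt (fun ψ => F ψ x) (F' x) ψ₀) :
    HasDerivAt (fun ψ => ∫ x, F ψ x ∂μ) (∫ x, F' x ∂μ) ψ₀ := by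
  obtain ⟨hinteg, hmain⟩ := hasFDerivAt_integral_of_dominated_loc_of_lip' (𝕜 := ℝ) hs hFm hF
    ((ContinuousLinearMap.toSpanSingletonCLE (𝕜 := ℝ)).continuous.comp_aestronglyMeasurable hF'm)
    hlip hbound (hderiv.mono fun x hx => hx.hasFDerivAt)
  refine hmain.hasDerivAt.congr_deriv ?_
  rw [ContinuousLinearMap.integral_apply hinteg]
  simp

variable {ι : Type*} [Fintype ι]

lemma integrable_exp_neg_mul_dotProduct_self {c : ℝ} (hc : 0 < c) :
    Integrable fun α : ι → ℝ => exp (-c * (α ⬝ᵥ α)) := by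
  have hprod : Integrable fun α : ι → ℝ => ∏ i, exp (-c * α i ^ 2) :=
    .fintype_prod fun _ => integrable_exp_neg_mul_sq hc
  simpa only [dotProduct, Finset.mul_sum, Real.exp_sum, sq] using hprod

lemma integrable_dotProduct_self_mul_exp_neg {c : ℝ} (hc : 0 < c) :
    Integrable fun α : ι → ℝ => (α ⬝ᵥ α) * exp (-c * (α ⬝ᵥ α)) := by
  refine ((integrable_exp_neg_mul_dotProduct_self (half_pos hc)).const_mul (2 / c)).mono'
    (by fun_prop) (ae_of_all _ fun α => ?_)
  set S := α ⬝ᵥ α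
  have hS : 0 ≤ S := dotProduct_self_star_nonneg α
  have hle : S ≤ 2 / c * exp (c / 2 * S) := by
    rw [div_mul_eq_mul_div, le_div_iff₀ hc]
    linarith [add_one_le_exp (c / 2 * S)]
  rw [Real.norm_of_nonneg (by positivity)]
  calc S * exp (-c * S) ≤ 2 / c * exp (c / 2 * S) * exp (-c * S) := by gcongr
    _ = 2 / c * exp (-(c / 2) * S) := by rw [mul_assoc, ← exp_add]; ring_nf

variable {h : (ι → ℝ) → ℝ} {C : ℝ}

lemma hasDerivAt_integral_mul_exp_dotProduct_mulVec (hm : AEStronglyMeasurable h)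
    (hC : ∀ α, ‖h α‖ ≤ C) {P : ℝ → Matrix ι ι ℝ} {D : Matrix ι ι ℝ} {ψ₀ : ℝ}
    (hP : HasDerivAt P D ψ₀) (hpos : (P ψ₀).PosDef) :
    HasDerivAt (fun ψ => ∫ α, h α * exp (-(1 / 2) * (α ⬝ᵥ P ψ *ᵥ α)))
      (∫ α, h α * (exp (-(1 / 2) * (α ⬝ᵥ P ψ₀ *ᵥ α)) * (-(1 / 2) * (α ⬝ᵥ D *ᵥ α)))) ψ₀ := by
  obtain ⟨c, hc, hcoercive⟩ := exists_pos_mul_dotProduct_le_of_posDef hpos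
  obtain ⟨K, hquad⟩ := exists_abs_dotProduct_mulVec_sub_le hP
  have hsmall : ∀ᶠ ψ in nhds ψ₀, K * |ψ - ψ₀| ≤ c / 2 := by
    have hcont : ContinuousAt (fun ψ => K * |ψ - ψ₀|) ψ₀ := by fun_prop
    exact hcont.eventually_le_const (by simpa using half_pos hc)
  have hmeas (ψ : ℝ) : AEStronglyMeasurable fun α => h α * exp (-(1 / 2) * (α ⬝ᵥ P ψ *ᵥ α)) :=
    hm.mul (by fun_prop)
  refine hasDerivAt_integral_of_dominated_of_lip_at
    (bound := fun α => C * (K / 2 * ((α ⬝ᵥ α) * exp (-(c / 4) * (α ⬝ᵥ α)))))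
    (hquad.and hsmall) (fun ψ _ => hmeas ψ) ?_ (hm.mul (by fun_prop))
    (ae_of_all _ fun α ψ hψ => ?_)
    (((integrable_dotProduct_self_mul_exp_neg (by positivity)).const_mul _).const_mul _)
    (ae_of_all _ fun α => ?_)
  · refine Integrable.bdd_mul (c := C) ?_ hm (ae_of_all _ hC)
    refine (integrable_exp_neg_mul_dotProduct_self (half_pos hc)).mono' (by fun_prop)
      (ae_of_all _ fun α => ?_)
    rw [Real.norm_of_nonneg (exp_pos _).le, exp_le_exp]
    linarith [hcoercive α]
  · rw [← mul_sub, norm_mul]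
    have hexp := abs_exp_neg_half_sub_exp_neg_half_le (dotProduct_self_star_nonneg α) hc.le
      (hcoercive α) hψ.2 (hψ.1 α)
    calc _ ≤ C * (K * |ψ - ψ₀| / 2 * ((α ⬝ᵥ α) * exp (-(c / 4) * (α ⬝ᵥ α)))) :=
          mul_le_mul (hC α) hexp (abs_nonneg _) ((norm_nonneg _).trans (hC α))
      _ = _ := by ring
  · exact (((hasDerivAt_dotProduct_mulVec hP α).const_mul _).exp).const_mul _

end GaussianIntegral

section NormalDensity

variable {n : ℕ} {h : (Fin n → ℝ) → ℝ} {C : ℝ} {R : ℝ → Matrix (Fin n) (Fin n) ℝ}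
  {D : Matrix (Fin n) (Fin n) ℝ} {ψ₀ : ℝ}

lemma integral_mul_mvnDens (f : (Fin n → ℝ) → ℝ) (Q : Matrix (Fin n) (Fin n) ℝ) :
    ∫ α, f α * mvnDens Q α =
      (2 * π) ^ (-(n : ℝ) / 2) * Q.det ^ (-(1 : ℝ) / 2) *
        ∫ α, f α * exp (-(1 / 2) * (α ⬝ᵥ Q⁻¹ *ᵥ α)) := by
  rw [← integral_const_mul]
  simp only [mvnDens, mul_left_comm]

lemma hasDerivAt_integral_mul_mvnDens (hm : AEStronglyMeasurable h) (hC : ∀ α, ‖h α‖ ≤ C)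
    (hR : HasDerivAt R D ψ₀) (hpos : (R ψ₀).PosDef) :
    HasDerivAt (fun ψ => ∫ α, h α * mvnDens (R ψ) α)
      (1 / 2 * (∫ α, h α * (α ⬝ᵥ ((R ψ₀)⁻¹ * D * (R ψ₀)⁻¹) *ᵥ α) * mvnDens (R ψ₀) α)
        - 1 / 2 * ((R ψ₀)⁻¹ * D).trace * ∫ α, h α * mvnDens (R ψ₀) α) ψ₀ := by
  have hdet := hasDerivAt_matrix_det_rpow hR hpos.det_pos.ne' (-(1 : ℝ) / 2)
  have hexp := hasDerivAt_integral_mul_exp_dotProduct_mulVec hm hC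
    (hasDerivAt_matrix_inv hR hpos.isUnit) hpos.inv
  have hquad : ∫ α, h α * (exp (-(1 / 2) * (α ⬝ᵥ (R ψ₀)⁻¹ *ᵥ α)) *
        (-(1 / 2) * (α ⬝ᵥ (-((R ψ₀)⁻¹ * D * (R ψ₀)⁻¹)) *ᵥ α))) =
      1 / 2 * ∫ α, h α * (α ⬝ᵥ ((R ψ₀)⁻¹ * D * (R ψ₀)⁻¹) *ᵥ α) *
        exp (-(1 / 2) * (α ⬝ᵥ (R ψ₀)⁻¹ *ᵥ α)) := by
    rw [← integral_const_mul]
    congr with α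
    rw [neg_mulVec, dotProduct_neg]
    ring
  rw [hquad] at hexp
  simp only [integral_mul_mvnDens]
  refine ((hdet.const_mul _).mul hexp).congr_deriv ?_
  ring

lemma mvnDens_one (α : Fin n → ℝ) : mvnDens 1 α = ∏ i, stdNormalPDF (α i) := by
  have hconst : (2 * π) ^ (-(n : ℝ) / 2) = (√(2 * π))⁻¹ ^ n := by
    rw [sqrt_eq_rpow, ← rpow_neg (by positivity), ← rpow_mul_natCast (by positivity)]
    ring_nf
  simp only [mvnDens, stdNormalPDF, Finset.prod_mul_distrib, ← Real.exp_sum, hconst, det_one,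
    one_rpow, mul_one, inv_one, one_mulVec, dotProduct, Finset.prod_const, Finset.card_univ,
    Fintype.card_fin, Finset.mul_sum]
  congr 2
  exact Finset.sum_congr rfl fun i _ => by ring

end NormalDensity

section StandardNormal

lemma stdNormalPDF_pos (x : ℝ) : 0 < stdNormalPDF x := by
  unfold stdNormalPDF
  positivity

lemma hasDerivAt_stdNormalPDF (x : ℝ) : HasDerivAt stdNormalPDF (-x * stdNormalPDF x) x := by
  have hsq : HasDerivAt (fun x : ℝ => -(x ^ 2) / 2) (-x) x :=
    (((hasDerivAt_pow 2 x).neg).div_const 2).congr_deriv (by push_cast; ring)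
  refine (hsq.exp.const_mul _).congr_deriv ?_
  simp only [stdNormalPDF]
  ring

@[fun_prop]
lemma continuous_stdNormalPDF : Continuous stdNormalPDF :=
  continuous_iff_continuousAt.2 fun x => (hasDerivAt_stdNormalPDF x).continuousAt

lemma stdNormalPDF_eq (x : ℝ) : stdNormalPDF x = (√(2 * π))⁻¹ * exp (-(1 / 2) * x ^ 2) := by
  rw [stdNormalPDF]
  ring_nf

lemma integrable_stdNormalPDF : Integrable stdNormalPDF := by
  simp only [funext stdNormalPDF_eq]
  exact (integrable_exp_neg_mul_sq one_half_pos).const_mul _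

lemma integrable_mul_stdNormalPDF : Integrable fun x => x * stdNormalPDF x := by
  simp only [stdNormalPDF_eq, mul_left_comm _ (√(2 * π))⁻¹]
  exact (integrable_mul_exp_neg_mul_sq one_half_pos).const_mul _

lemma integrable_bdd_mul_stdNormalPDF {k : ℝ → ℝ} {C : ℝ} (hm : AEStronglyMeasurable k)
    (hC : ∀ x, ‖k x‖ ≤ C) : Integrable fun x => k x * stdNormalPDF x :=
  integrable_stdNormalPDF.bdd_mul hm (ae_of_all _ hC)

lemma integrable_mul_bdd_mul_stdNormalPDF {k : ℝ → ℝ} {C : ℝ} (hm : AEStronglyMeasurable k)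
    (hC : ∀ x, ‖k x‖ ≤ C) : Integrable fun x => x * (k x * stdNormalPDF x) := by
  simp only [mul_left_comm _ (k _)]
  exact integrable_mul_stdNormalPDF.bdd_mul hm (ae_of_all _ hC)

lemma integral_mul_mul_stdNormalPDF {k k' : ℝ → ℝ} (hk : ∀ x, HasDerivAt k (k' x) x)
    (hinteg : Integrable fun x => k x * stdNormalPDF x)
    (hinteg₁ : Integrable fun x => x * (k x * stdNormalPDF x))
    (hinteg' : Integrable fun x => k' x * stdNormalPDF x) :
    ∫ x, x * (k x * stdNormalPDF x) = ∫ x, k' x * stdNormalPDF x := by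
  have hderiv (x : ℝ) : HasDerivAt (fun x => k x * stdNormalPDF x)
      (k' x * stdNormalPDF x - x * (k x * stdNormalPDF x)) x :=
    ((hk x).mul (hasDerivAt_stdNormalPDF x)).congr_deriv (by ring)
  have hzero := integral_eq_zero_of_hasDerivAt_of_integrable hderiv (hinteg'.sub hinteg₁) hinteg
  rw [integral_sub hinteg' hinteg₁] at hzero
  exact (sub_eq_zero.1 hzero).symm

end StandardNormal

/-- The mean of the probability density proportional to `p`; it is `0` if `∫ p = 0`. -/
def densityMean (p : ℝ → ℝ) : ℝ := (∫ x, x * p x) / ∫ x, p x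

section ProductDensity

variable {ι : Type*} [Fintype ι] {p : ι → ℝ → ℝ}

lemma integrable_prod_mul_prod (hp : ∀ i, Integrable (p i))
    (hp₁ : ∀ i, Integrable fun x => x * p i x) (A : Finset ι) :
    Integrable fun α : ι → ℝ => (∏ i ∈ A, α i) * ∏ i, p i (α i) := by
  classical
  simp only [← Fintype.prod_ite_mem A, ← Finset.prod_mul_distrib]
  refine Integrable.fintype_prod (f := fun i x => (if i ∈ A then x else 1) * p i x) fun i => ?_
  split_ifs
  · exact hp₁ i
  · simpa only [one_mul] using hp i

lemma integral_prod_mul_prod (hp : ∀ i, ∫ x, p i x ≠ 0) (A : Finset ι) :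
    ∫ α : ι → ℝ, (∏ i ∈ A, α i) * ∏ i, p i (α i) =
      (∏ i ∈ A, densityMean (p i)) * ∏ i, ∫ x, p i x := by
  classical
  simp only [← Fintype.prod_ite_mem A, ← Finset.prod_mul_distrib]
  rw [integral_fintype_prod_volume_eq_prod fun i x => (if i ∈ A then x else 1) * p i x]
  refine Finset.prod_congr rfl fun i _ => ?_
  split_ifs
  · exact (div_mul_cancel₀ _ (hp i)).symm
  · simp only [one_mul]

lemma integral_dotProduct_mulVec_mul_prod (hp : ∀ i, Integrable (p i))
    (hp₁ : ∀ i, Integrable fun x => x * p i x) (hp₀ : ∀ i, ∫ x, p i x ≠ 0) {D : Matrix ι ι ℝ}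
    (hD : ∀ s, D s s = 0) :
    ∫ α : ι → ℝ, (α ⬝ᵥ D *ᵥ α) * ∏ i, p i (α i) =
      ((fun i => densityMean (p i)) ⬝ᵥ D *ᵥ fun i => densityMean (p i)) *
        ∏ i, ∫ x, p i x := by
  classical
  have hpair (s t : ι) :
      Integrable (fun α : ι → ℝ => D s t * (α s * α t) * ∏ i, p i (α i)) ∧
        ∫ α : ι → ℝ, D s t * (α s * α t) * ∏ i, p i (α i) =
          D s t * (densityMean (p s) * densityMean (p t)) * ∏ i, ∫ x, p i x := by
    rcases eq_or_ne s t with rfl | hst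
    · simp [hD]
    · have hinteg := integrable_prod_mul_prod hp hp₁ {s, t}
      have hval := integral_prod_mul_prod hp₀ {s, t}
      simp only [Finset.prod_pair hst] at hinteg hval
      simp only [mul_assoc (D s t), integral_const_mul, hval]
      exact ⟨hinteg.const_mul _, trivial⟩
  simp only [dotProduct_mulVec_eq_sum, Finset.sum_mul]
  rw [integral_finsetSum _ fun s _ => integrable_finsetSum _ fun t _ => (hpair s t).1]
  refine Finset.sum_congr rfl fun s _ => ?_
  rw [integral_finsetSum _ fun t _ => (hpair s t).1]
  exact Finset.sum_congr rfl fun t _ => (hpair s t).2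

end ProductDensity

lemma hasDerivAt_log_integral_prod_mul_mvnDens {n : ℕ} {k : Fin n → ℝ → ℝ} {C : Fin n → ℝ}
    (hm : ∀ i, Measurable (k i)) (hC : ∀ i x, ‖k i x‖ ≤ C i)
    (hk₀ : ∀ i, ∫ x, k i x * stdNormalPDF x ≠ 0) {R : ℝ → Matrix (Fin n) (Fin n) ℝ}
    {D : Matrix (Fin n) (Fin n) ℝ} {ψ₀ : ℝ} (hR₀ : R ψ₀ = 1) (hR : HasDerivAt R D ψ₀)
    (hD : ∀ s, D s s = 0) {μ : Fin n → ℝ}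
    (hμ : ∀ i, μ i = densityMean fun x => k i x * stdNormalPDF x) :
    HasDerivAt (fun ψ => log (∫ α, (∏ i, k i (α i)) * mvnDens (R ψ) α))
      (1 / 2 * (μ ⬝ᵥ D *ᵥ μ)) ψ₀ := by
  obtain rfl := funext hμ
  have hprod_le (α : Fin n → ℝ) : ‖∏ i, k i (α i)‖ ≤ ∏ i, C i := by
    rw [norm_prod]
    exact Finset.prod_le_prod (fun i _ => norm_nonneg _) fun i _ => hC i _
  have hderiv := hasDerivAt_integral_mul_mvnDens
    (Measurable.aestronglyMeasurable (by fun_prop)) hprod_le hR (hR₀ ▸ PosDef.one)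
  have hcross := integral_dotProduct_mulVec_mul_prod
    (fun i => integrable_bdd_mul_stdNormalPDF (hm i).aestronglyMeasurable (hC i))
    (fun i => integrable_mul_bdd_mul_stdNormalPDF (hm i).aestronglyMeasurable (hC i)) hk₀ hD
  simp only [Finset.prod_mul_distrib, ← mvnDens_one, mul_left_comm (_ ⬝ᵥ _), ← mul_assoc] at hcross
  have hZ : ∫ α, (∏ i, k i (α i)) * mvnDens (R ψ₀) α = ∏ i, ∫ x, k i x * stdNormalPDF x := by
    simp only [hR₀, mvnDens_one, ← Finset.prod_mul_distrib]
    exact integral_fintype_prod_volume_eq_prod fun i x => k i x * stdNormalPDF x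
  have hZ₀ : ∏ i, ∫ x, k i x * stdNormalPDF x ≠ 0 := Finset.prod_ne_zero_iff.2 fun i _ => hk₀ i
  have htrace : D.trace = 0 := Finset.sum_eq_zero fun s _ => hD s
  refine (hderiv.log (hZ ▸ hZ₀)).congr_deriv ?_
  rw [hZ, hR₀, inv_one, Matrix.one_mul, Matrix.mul_one, htrace, hcross]
  field_simp
  ring

section Binomial

lemma hasDerivAt_bfun (w : ℝ) : HasDerivAt bfun (bdot w) w :=
  ((Real.hasDerivAt_exp w).const_add 1).log (by positivity)

@[fun_prop]
lemma continuous_bfun : Continuous bfun :=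
  continuous_iff_continuousAt.2 fun w => (hasDerivAt_bfun w).continuousAt

@[fun_prop]
lemma continuous_bdot : Continuous bdot :=
  Real.continuous_exp.div (by fun_prop) fun w => by positivity

lemma norm_bdot_le_one (w : ℝ) : ‖bdot w‖ ≤ 1 := by
  rw [bdot, Real.norm_of_nonneg (by positivity)]
  exact div_le_one_of_le₀ (le_add_of_nonneg_left zero_le_one) (by positivity)

lemma bfun_nonneg (w : ℝ) : 0 ≤ bfun w := log_nonneg (by linarith [exp_pos w])

lemma le_bfun (w : ℝ) : w ≤ bfun w := (le_log_iff_exp_le (by positivity)).2 (by linarith)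

/-- The binomial likelihood in the natural parameter `v`, without the factor `C(m, y)`. -/
def binKernel (m y : ℕ) (v : ℝ) : ℝ := exp ((y : ℝ) * v - (m : ℝ) * bfun v)

variable {m y : ℕ} (w σ : ℝ)

lemma binDens_eq (hy : y ≤ m) (v : ℝ) : binDens m y v = (m.choose y : ℝ) * binKernel m y v := by
  rw [binDens, exp_add, exp_log (by exact_mod_cast Nat.choose_pos hy), mul_comm, binKernel]

lemma norm_binKernel_le_one (hy : y ≤ m) (v : ℝ) : ‖binKernel m y v‖ ≤ 1 := by
  rw [binKernel, Real.norm_of_nonneg (exp_pos _).le, exp_le_one_iff, sub_nonpos]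
  calc (y : ℝ) * v ≤ y * bfun v := by gcongr; exact le_bfun v
    _ ≤ m * bfun v := by gcongr; exact bfun_nonneg v

@[fun_prop]
lemma continuous_binKernel : Continuous (binKernel m y) := by
  unfold binKernel
  fun_prop

lemma hasDerivAt_binKernel (v : ℝ) :
    HasDerivAt (binKernel m y) ((y - m * bdot v) * binKernel m y v) v :=
  ((((hasDerivAt_id v).const_mul _).sub ((hasDerivAt_bfun v).const_mul _)).exp).congr_deriv
    (by simp [binKernel, mul_comm])

lemma integrable_binKernel_mul_stdNormalPDF (hy : y ≤ m) :
    Integrable fun x => binKernel m y (w + σ * x) * stdNormalPDF x :=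
  integrable_bdd_mul_stdNormalPDF (Continuous.aestronglyMeasurable (by fun_prop))
    fun _ => norm_binKernel_le_one hy _

lemma integrable_bdot_mul_binKernel_mul_stdNormalPDF (hy : y ≤ m) :
    Integrable fun x => bdot (w + σ * x) * (binKernel m y (w + σ * x) * stdNormalPDF x) :=
  (integrable_binKernel_mul_stdNormalPDF w σ hy).bdd_mul
    (Continuous.aestronglyMeasurable (by fun_prop)) (ae_of_all _ fun _ => norm_bdot_le_one _)

lemma integral_binKernel_mul_stdNormalPDF_pos (hy : y ≤ m) :
    0 < ∫ x, binKernel m y (w + σ * x) * stdNormalPDF x := by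
  have hpos (x : ℝ) : 0 < binKernel m y (w + σ * x) * stdNormalPDF x :=
    mul_pos (exp_pos _) (stdNormalPDF_pos x)
  exact integral_pos_of_integrable_nonneg_nonzero (x := 0)
    (by fun_prop) (integrable_binKernel_mul_stdNormalPDF w σ hy) (fun x => (hpos x).le) (hpos 0).ne'

/-- The posterior-mean residual `u = y − E[m ḃ(w + σ α) | y]` of a binomial count `y` with standard
normal latent variable `α`. -/
def posteriorResidual (m y : ℕ) (w σ : ℝ) : ℝ :=
  (y : ℝ) - (∫ x, (m : ℝ) * bdot (w + σ * x) * binDens m y (w + σ * x) * stdNormalPDF x) /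
    ∫ x, binDens m y (w + σ * x) * stdNormalPDF x

lemma posteriorResidual_eq (hy : y ≤ m) :
    posteriorResidual m y w σ =
      y - m * (∫ x, bdot (w + σ * x) * (binKernel m y (w + σ * x) * stdNormalPDF x)) /
        ∫ x, binKernel m y (w + σ * x) * stdNormalPDF x := by
  have hchoose : (m.choose y : ℝ) ≠ 0 := by exact_mod_cast (Nat.choose_pos hy).ne'
  rw [posteriorResidual, ← mul_div_mul_left ((m : ℝ) * _) _ hchoose]
  simp only [binDens_eq hy, ← integral_const_mul]
  congr 3 <;> ext x <;> ring

lemma densityMean_binKernel_mul_stdNormalPDF (hy : y ≤ m) :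
    densityMean (fun x => binKernel m y (w + σ * x) * stdNormalPDF x) =
      σ * posteriorResidual m y w σ := by
  have hinteg := integrable_binKernel_mul_stdNormalPDF w σ hy
  have hdot := integrable_bdot_mul_binKernel_mul_stdNormalPDF w σ hy
  have hderiv (x : ℝ) : HasDerivAt (fun x => binKernel m y (w + σ * x))
      ((y - m * bdot (w + σ * x)) * binKernel m y (w + σ * x) * σ) x :=
    (hasDerivAt_binKernel _).comp x (by simpa using ((hasDerivAt_id x).const_mul σ).const_add w)
  have hexpand (x : ℝ) :
      (y - m * bdot (w + σ * x)) * binKernel m y (w + σ * x) * σ * stdNormalPDF x =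
        σ * (y * (binKernel m y (w + σ * x) * stdNormalPDF x) -
          m * (bdot (w + σ * x) * (binKernel m y (w + σ * x) * stdNormalPDF x))) := by ring
  have hstein := integral_mul_mul_stdNormalPDF hderiv hinteg
    (integrable_mul_bdd_mul_stdNormalPDF (Continuous.aestronglyMeasurable (by fun_prop))
      fun _ => norm_binKernel_le_one hy _)
    (by
      simp only [hexpand]
      exact ((hinteg.const_mul (y : ℝ)).sub (hdot.const_mul (m : ℝ))).const_mul σ)
  have hZ := (integral_binKernel_mul_stdNormalPDF_pos w σ hy).ne'
  simp only [hexpand, integral_const_mul] at hstein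
  rw [integral_sub (hinteg.const_mul _) (hdot.const_mul _)] at hstein
  simp only [integral_const_mul] at hstein
  rw [densityMean, hstein, posteriorResidual_eq w σ hy]
  field_simp

end Binomial

section LagMatrix

/-- The symmetric Toeplitz matrix with ones on the two diagonals at distance `a` from the main
one. -/
def lagMatrix (n a : ℕ) : Matrix (Fin n) (Fin n) ℝ :=
  of fun s t => if Nat.dist s t = a then 1 else 0

variable {n a : ℕ}

lemma lagMatrix_apply_self (ha : a ≠ 0) (s : Fin n) : lagMatrix n a s s = 0 := by
  simp [lagMatrix, ha.symm]

lemma dotProduct_lagMatrix_mulVec (ha : a ≠ 0) (u : Fin n → ℝ) :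
    u ⬝ᵥ lagMatrix n a *ᵥ u =
      2 * ∑ t : Fin n, ∑ s : Fin n, if (t : ℕ) = (s : ℕ) + a then u t * u s else 0 := by
  have hsplit (s t : Fin n) : lagMatrix n a s t * (u s * u t) =
      (if (s : ℕ) = (t : ℕ) + a then u s * u t else 0) +
        (if (t : ℕ) = (s : ℕ) + a then u t * u s else 0) := by
    simp only [lagMatrix, of_apply]
    unfold Nat.dist
    split_ifs <;> first | omega | ring
  simp only [dotProduct_mulVec_eq_sum, hsplit, Finset.sum_add_distrib]
  rw [Finset.sum_comm (f := fun s t : Fin n => if (t : ℕ) = (s : ℕ) + a then u t * u s else 0),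
    two_mul]

end LagMatrix

theorem statement15_general {n : ℕ} {m y : Fin n → ℕ} (hy : ∀ t, y t ≤ m t) (w : Fin n → ℝ)
    (σ : ℝ) {R : ℝ → Matrix (Fin n) (Fin n) ℝ} {D : Matrix (Fin n) (Fin n) ℝ} {ψ₀ : ℝ}
    (hR₀ : R ψ₀ = 1) (hR : HasDerivAt R D ψ₀) (hD : ∀ s, D s s = 0) {u : Fin n → ℝ}
    (hu : ∀ t, u t = posteriorResidual (m t) (y t) (w t) σ) :
    HasDerivAt (fun ψ => log (∫ α : Fin n → ℝ,
        exp (∑ t, ((y t : ℝ) * (w t + σ * α t) - (m t : ℝ) * bfun (w t + σ * α t))) *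
          mvnDens (R ψ) α))
      (σ ^ 2 / 2 * (u ⬝ᵥ D *ᵥ u)) ψ₀ := by
  have hscore := hasDerivAt_log_integral_prod_mul_mvnDens (μ := σ • u)
    (k := fun t x => binKernel (m t) (y t) (w t + σ * x))
    (fun t => Continuous.measurable (by fun_prop)) (fun t x => norm_binKernel_le_one (hy t) _)
    (fun t => (integral_binKernel_mul_stdNormalPDF_pos _ _ (hy t)).ne') hR₀ hR hD fun t => by
      rw [densityMean_binKernel_mul_stdNormalPDF _ _ (hy t), ← hu t, Pi.smul_apply, smul_eq_mul]
  simp only [binKernel, ← Real.exp_sum] at hscore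
  refine hscore.congr_deriv ?_
  rw [mulVec_smul, smul_dotProduct, dotProduct_smul, smul_eq_mul, smul_eq_mul]
  ring

/-- At `ψ = 0` the score of the full parameter-driven likelihood with respect
to a lag-`a` dependence parameter equals `τ` times the lag-`a` sum of cross-products of
posterior-mean residuals: with `R(0) = Iₙ`, `[R'(0)]_{s,t} = 1_{|s−t| = a}`, and
`L(ψ) = ∫_{ℝⁿ} exp( Σ_t [ y_t (w_t + √τ α_t) − m_t b(w_t + √τ α_t) ] ) g(α, R(ψ)) dα`,
the function `ψ ↦ log L(ψ)` is differentiable at `0` with derivative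
`τ Σ_{t > a} u_t u_{t−a}`, where
`u_t = y_t − (∫ m_t ḃ(w_t+√τ α) f(y_t|w_t+√τ α) φ(α) dα)/(∫ f(y_t|w_t+√τ α) φ(α) dα)`.
(The time points are indexed here by `Fin n`; the sum `Σ_{t=a+1}^n u_t u_{t−a}` is written as
the double sum over pairs `(t, s)` with `t = s + a`.) -/
theorem statement15 (n : ℕ) (a : ℕ) (ha : 1 ≤ a) (han : a < n)
    (m : Fin n → ℕ) (hm : ∀ t, 1 ≤ m t)
    (y : Fin n → ℕ) (hy : ∀ t, y t ≤ m t)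
    (w : Fin n → ℝ) (τ : ℝ) (hτ : 0 ≤ τ)
    (ε : ℝ) (hε : 0 < ε)
    (R : ℝ → Matrix (Fin n) (Fin n) ℝ)
    (hRsymm : ∀ ψ ∈ Set.Ioo (-ε) ε, (R ψ).IsSymm)
    (hRpos : ∀ ψ ∈ Set.Ioo (-ε) ε, (R ψ).PosDef)
    (hR0 : R 0 = 1)
    (hR' : ∀ s t : Fin n, HasDerivAt (fun ψ => R ψ s t)
        (if Nat.dist (s : ℕ) (t : ℕ) = a then (1 : ℝ) else 0) 0)
    (L : ℝ → ℝ)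
    (hL : ∀ ψ, L ψ = ∫ α : Fin n → ℝ,
        Real.exp (∑ t, ((y t : ℝ) * (w t + Real.sqrt τ * α t)
          - (m t : ℝ) * bfun (w t + Real.sqrt τ * α t))) * mvnDens (R ψ) α)
    (u : Fin n → ℝ)
    (hu : ∀ t, u t = (y t : ℝ) -
      (∫ α : ℝ, (m t : ℝ) * bdot (w t + Real.sqrt τ * α)
          * binDens (m t) (y t) (w t + Real.sqrt τ * α) * stdNormalPDF α) /
      (∫ α : ℝ, binDens (m t) (y t) (w t + Real.sqrt τ * α) * stdNormalPDF α)) :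
    HasDerivAt (fun ψ => Real.log (L ψ))
      (τ * ∑ t : Fin n, ∑ s : Fin n,
        (if (t : ℕ) = (s : ℕ) + a then u t * u s else 0))
      0 := by
  obtain rfl := funext hL
  have hR : HasDerivAt R (lagMatrix n a) 0 := hasDerivAt_matrix_iff.2 hR'
  have ha₀ : a ≠ 0 := Nat.one_le_iff_ne_zero.1 ha
  refine (statement15_general hy w √τ hR0 hR (lagMatrix_apply_self ha₀) hu).congr_deriv ?_
  rw [dotProduct_lagMatrix_mulVec ha₀, Real.sq_sqrt hτ]
  ring

end
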